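/- Let z ∈ ℝⁿ with 0 < z₁ ≤ … ≤ zₙ, θ > 0, fix 1 ≤ k < n, and set b_k = ∑_{i=1}^k zᵢ, λ* = (θ b_k + √(θ² b_k² + 4k))/(2k). Then the condition θ z_k ≤ λ* < θ z_{k+1} holds if and only if θ² (k z_k² − b_k z_k) ≤ 1 < θ² (k z_{k+1}² − b_k z_{k+1}). -/

import Mathlib

/-!
The number `lam` is the larger root of `k t² - θ b t - 1`, whose roots have product `-1 / k < 0`.
A nonnegative `t` therefore lies above the smaller root, and so `t ≤ lam` exactly when the quadratic
is nonpositive at `t`. The theorem is this criterion at `t = θ z k` and at `t = θ z (k + 1)`.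
-/

section Field

variable {K : Type*} [Field K] [NeZero (2 : K)] {a b c s : K}

lemma quadratic_eq_mul_sub_roots (ha : a ≠ 0) (hs : discrim a b c = s * s) (x : K) :
    a * (x * x) + b * x + c = a * (x - (-b - s) / (2 * a)) * (x - (-b + s) / (2 * a)) := by
  rw [discrim] at hs
  field_simp
  linear_combination -hs

end Field

section OrderedField

variable {K : Type*} [Field K] [LinearOrder K] [IsStrictOrderedRing K] {a b c s x : K}

lemma quadratic_nonpos_iff_le_root_of_root_lt (ha : 0 < a) (hs : discrim a b c = s * s)
    (hx : (-b - s) / (2 * a) < x) :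
    a * (x * x) + b * x + c ≤ 0 ↔ x ≤ (-b + s) / (2 * a) := by
  have hcoeff : 0 < a * (x - (-b - s) / (2 * a)) := mul_pos ha (sub_pos.2 hx)
  rw [quadratic_eq_mul_sub_roots ha.ne' hs, ← not_lt, mul_pos_iff_of_pos_left hcoeff, sub_pos,
    not_lt]

end OrderedField

lemma neg_lt_sqrt_discrim {a b c : ℝ} (hac : a * c < 0) : -b < √(discrim a b c) :=
  Real.lt_sqrt_of_sq_lt (by rw [discrim]; linarith [neg_sq b])

lemma quadratic_nonpos_iff_le_root_of_nonneg {a b c x : ℝ} (ha : 0 < a) (hc : c < 0) (hx : 0 ≤ x) :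
    a * (x * x) + b * x + c ≤ 0 ↔ x ≤ (-b + √(discrim a b c)) / (2 * a) := by
  have hac : a * c < 0 := mul_neg_of_pos_of_neg ha hc
  have hdiscrim : 0 ≤ discrim a b c := by rw [discrim]; linarith [sq_nonneg b]
  have hroot : (-b - √(discrim a b c)) / (2 * a) < 0 :=
    div_neg_of_neg_of_pos (sub_neg.2 (neg_lt_sqrt_discrim hac)) (by positivity)
  exact quadratic_nonpos_iff_le_root_of_root_lt ha (Real.mul_self_sqrt hdiscrim).symm
    (hroot.trans_le hx)

lemma mul_le_root_iff {κ θ b x : ℝ} (hκ : 0 < κ) (hx : 0 ≤ θ * x) :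
    θ * x ≤ (θ * b + √(θ ^ 2 * b ^ 2 + 4 * κ)) / (2 * κ) ↔
      θ ^ 2 * (κ * x ^ 2 - b * x) ≤ 1 := by
  have hdiscrim : discrim κ (-(θ * b)) (-1) = θ ^ 2 * b ^ 2 + 4 * κ := by rw [discrim]; ring
  have hvalue : κ * (θ * x * (θ * x)) + -(θ * b) * (θ * x) + -1 =
      θ ^ 2 * (κ * x ^ 2 - b * x) - 1 := by ring
  rw [← sub_nonpos (b := (1 : ℝ)), ← hvalue,
    quadratic_nonpos_iff_le_root_of_nonneg hκ neg_one_lt_zero hx, hdiscrim, neg_neg]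

theorem stmt_4_general {κ θ b lam x y : ℝ} (hκ : 0 < κ) (hθ : 0 ≤ θ) (hx : 0 ≤ x) (hy : 0 ≤ y)
    (hlam : lam = (θ * b + √(θ ^ 2 * b ^ 2 + 4 * κ)) / (2 * κ)) :
    (θ * x ≤ lam ∧ lam < θ * y) ↔
      (θ ^ 2 * (κ * x ^ 2 - b * x) ≤ 1 ∧ 1 < θ ^ 2 * (κ * y ^ 2 - b * y)) := by
  subst hlam
  exact and_congr (mul_le_root_iff hκ (mul_nonneg hθ hx))
    (lt_iff_lt_of_le_iff_le (mul_le_root_iff hκ (mul_nonneg hθ hy)))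

theorem stmt_4 (n : ℕ) (z : ℕ → ℝ)
    (hpos : ∀ i, 1 ≤ i → i ≤ n → 0 < z i)
    (hsort : ∀ i, 1 ≤ i → i < n → z i ≤ z (i + 1))
    (θ : ℝ) (hθ : 0 < θ)
    (k : ℕ) (hk1 : 1 ≤ k) (hkn : k < n)
    (b lam : ℝ)
    (hb : b = ∑ i ∈ Finset.Icc 1 k, z i)
    (hlam : lam = (θ * b + Real.sqrt (θ ^ 2 * b ^ 2 + 4 * k)) / (2 * k)) :
    (θ * z k ≤ lam ∧ lam < θ * z (k + 1)) ↔
      (θ ^ 2 * (k * z k ^ 2 - b * z k) ≤ 1 ∧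
        1 < θ ^ 2 * (k * z (k + 1) ^ 2 - b * z (k + 1))) :=
  stmt_4_general (Nat.cast_pos.2 hk1) hθ.le (hpos k hk1 hkn.le).le
    (hpos (k + 1) k.succ_pos hkn).le hlam
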